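/- arXiv:1705.09565 — 4 statements merged into one kernel-verified Lean document; each statement's English description precedes it below -/
import Mathlib

section
/- Fix constants h, ε, η, λ, M > 0 and d ∈ ℕ. Let g : ℝ × ℝ^d → ℝ^d be continuous with ‖g(t,x)‖ ≤ M for all (t,x) and ‖g(t,x) − g(t,y)‖ ≤ λ·‖x − y‖ for all t, x, y. Let v : ℝ → ℝ^d be differentiable with v'(t) = h·ε·g(t, v(t)) for all t ≥ 0. Then for every t with 0 ≤ t ≤ 1/ε, ‖(1/η)·∫₀^η ρ(s/η)·(∫₀^t ( g(τ+s, v(τ+s)) − g(τ+s, v(τ)) ) dτ) ds‖ ≤ C₀·h·η·λ·M. -/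
/-!
Since `‖v'‖ ≤ h ε M` on `[0, ∞)`, the mean value inequality gives `‖v (τ + s) - v τ‖ ≤ h ε M s`, so
the Lipschitz bound on `g` and `t ε ≤ 1` bound the inner integral by `lam h M s`. Substituting
`s = η u` turns the average against `ρ (s / η)` into an average over `[0, 1]`, and integrating the
linear bound `lam h M η u` there produces the first moment of `ρ`.
-/

open Set MeasureTheory

theorem norm_integral_shift_sub_le {E F : Type*} [NormedAddCommGroup E]
    [NormedAddCommGroup F] [NormedSpace ℝ F] {g : ℝ × E → F} {v : ℝ → E} {lam δ a b s : ℝ}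
    (hlam : 0 ≤ lam) (hg : ∀ t x y, ‖g (t, x) - g (t, y)‖ ≤ lam * ‖x - y‖) (hab : a ≤ b)
    (hv : ∀ τ ∈ Ioc a b, ‖v (τ + s) - v τ‖ ≤ δ) :
    ‖∫ τ in a..b, (g (τ + s, v (τ + s)) - g (τ + s, v τ))‖ ≤ lam * δ * (b - a) := by
  rw [← abs_of_nonneg (sub_nonneg.2 hab)]
  refine intervalIntegral.norm_integral_le_of_norm_le_const fun τ hτ ↦ ?_
  rw [uIoc_of_le hab] at hτ
  exact (hg _ _ _).trans (mul_le_mul_of_nonneg_left (hv τ hτ) hlam)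

section

variable {E : Type*} [NormedAddCommGroup E] [NormedSpace ℝ E]

theorem norm_add_sub_le_of_norm_hasDerivAt_le {v v' : ℝ → E} {a C τ s : ℝ}
    (hv : ∀ t, a ≤ t → HasDerivAt v (v' t) t) (hv' : ∀ t, a ≤ t → ‖v' t‖ ≤ C)
    (hτ : a ≤ τ) (hs : 0 ≤ s) : ‖v (τ + s) - v τ‖ ≤ C * s := by
  have mean_value := (convex_Ici a).norm_image_sub_le_of_norm_hasDerivWithin_le
    (fun t ht ↦ (hv t ht).hasDerivWithinAt) hv' (mem_Ici.2 hτ)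
    (mem_Ici.2 (le_add_of_le_of_nonneg hτ hs))
  rwa [add_sub_cancel_left, Real.norm_of_nonneg hs] at mean_value

theorem inv_smul_integral_comp_div_smul (ρ : ℝ → ℝ) (G : ℝ → E) {η : ℝ} (hη : η ≠ 0) :
    η⁻¹ • ∫ s in (0 : ℝ)..η, ρ (s / η) • G s = ∫ u in (0 : ℝ)..1, ρ u • G (η * u) := by
  simpa only [mul_div_cancel₀ _ hη, zero_div, div_self hη] using
    intervalIntegral.inv_smul_integral_comp_div (a := 0) (b := η) (fun u ↦ ρ u • G (η * u)) η

theorem norm_integral_smul_le_mul_first_moment {ρ : ℝ → ℝ} {G : ℝ → E} {K b : ℝ} (hb : 0 ≤ b)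
    (hρ : IntervalIntegrable ρ volume 0 b) (hρ0 : ∀ u ∈ Ioc 0 b, 0 ≤ ρ u)
    (hG : ∀ u ∈ Ioc 0 b, ‖G u‖ ≤ K * u) :
    ‖∫ u in (0 : ℝ)..b, ρ u • G u‖ ≤ K * ∫ u in (0 : ℝ)..b, ρ u * u := by
  rw [← intervalIntegral.integral_const_mul]
  refine intervalIntegral.norm_integral_le_of_norm_le hb (.of_forall fun u hu ↦ ?_)
    ((hρ.mul_continuousOn continuousOn_id).const_mul K)
  calc ‖ρ u • G u‖ = ρ u * ‖G u‖ := by rw [norm_smul, Real.norm_of_nonneg (hρ0 u hu)]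
    _ ≤ ρ u * (K * u) := mul_le_mul_of_nonneg_left (hG u hu) (hρ0 u hu)
    _ = K * (ρ u * u) := by ring

theorem norm_integral_shift_sub_le_of_ode {g : ℝ × E → E} {v : ℝ → E} {h ε lam M t s : ℝ}
    (hh : 0 ≤ h) (hε : 0 < ε) (hlam : 0 ≤ lam) (hgM : ∀ p, ‖g p‖ ≤ M)
    (hgLip : ∀ t x y, ‖g (t, x) - g (t, y)‖ ≤ lam * ‖x - y‖)
    (hv : ∀ t, 0 ≤ t → HasDerivAt v ((h * ε) • g (t, v t)) t)
    (ht0 : 0 ≤ t) (ht1 : t ≤ 1 / ε) (hs : 0 ≤ s) :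
    ‖∫ τ in (0 : ℝ)..t, (g (τ + s, v (τ + s)) - g (τ + s, v τ))‖ ≤ h * lam * M * s := by
  have hM : 0 ≤ M := (norm_nonneg _).trans (hgM 0)
  have speed_le (τ : ℝ) : ‖(h * ε) • g (τ, v τ)‖ ≤ h * ε * M := by
    rw [norm_smul, Real.norm_of_nonneg (by positivity)]
    exact mul_le_mul_of_nonneg_left (hgM _) (by positivity)
  have displacement_le : ∀ τ ∈ Ioc 0 t, ‖v (τ + s) - v τ‖ ≤ h * ε * M * s := fun τ hτ ↦
    norm_add_sub_le_of_norm_hasDerivAt_le hv (fun τ _ ↦ speed_le τ) hτ.1.le hs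
  have time_le : t * ε ≤ 1 := (le_div_iff₀ hε).1 ht1
  calc ‖∫ τ in (0 : ℝ)..t, (g (τ + s, v (τ + s)) - g (τ + s, v τ))‖
      ≤ lam * (h * ε * M * s) * (t - 0) :=
        norm_integral_shift_sub_le hlam hgLip ht0 displacement_le
    _ = h * lam * M * s * (t * ε) := by ring
    _ ≤ h * lam * M * s := mul_le_of_le_one_right (by positivity) time_le

theorem kernel_average_R2_bound_general [CompleteSpace E] {ρ : ℝ → ℝ}
    (hρ : IntervalIntegrable ρ volume 0 1) (hρ0 : ∀ s ∈ Ioc 0 1, 0 ≤ ρ s)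
    {h ε η lam M : ℝ} (hh : 0 ≤ h) (hε : 0 < ε) (hη : 0 < η) (hlam : 0 ≤ lam)
    {g : ℝ × E → E} (hgM : ∀ p, ‖g p‖ ≤ M)
    (hgLip : ∀ t x y, ‖g (t, x) - g (t, y)‖ ≤ lam * ‖x - y‖)
    {v : ℝ → E} (hv : ∀ t, 0 ≤ t → HasDerivAt v ((h * ε) • g (t, v t)) t)
    {t : ℝ} (ht0 : 0 ≤ t) (ht1 : t ≤ 1 / ε) :
    ‖(1 / η) • ∫ s in (0 : ℝ)..η, ρ (s / η) •
        ∫ τ in (0 : ℝ)..t, (g (τ + s, v (τ + s)) - g (τ + s, v τ))‖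
      ≤ (∫ s in (0 : ℝ)..1, ρ s * s) * h * η * lam * M := by
  rw [one_div, inv_smul_integral_comp_div_smul ρ _ hη.ne']
  calc _ ≤ h * lam * M * η * ∫ s in (0 : ℝ)..1, ρ s * s :=
        norm_integral_smul_le_mul_first_moment zero_le_one hρ hρ0 fun u hu ↦
          (norm_integral_shift_sub_le_of_ode hh hε hlam hgM hgLip hv ht0 ht1
            (mul_nonneg hη.le hu.1.le)).trans_eq (by ring)
    _ = (∫ s in (0 : ℝ)..1, ρ s * s) * h * η * lam * M := by ring

end

/-- Bound on the remainder term `R₂` in the proof of the averaging lemma (Lemma A.2):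
for a bounded Lipschitz vector field `g` and a solution `v` of `v' = h·ε·g(t,v)`,
for `0 ≤ t ≤ 1/ε`,
`‖(1/η)∫₀^η ρ(s/η)·(∫₀^t (g(τ+s,v(τ+s)) − g(τ+s,v(τ))) dτ) ds‖ ≤ C₀·h·η·λ·M`. -/
theorem kernel_average_R2_bound
    (ρ : ℝ → ℝ) (hρc : Continuous ρ) (hρ0 : ∀ s, 0 ≤ ρ s)
    (hρsupp : ∀ s, s ∉ Set.Icc (0:ℝ) 1 → ρ s = 0)
    (hρint : (∫ s in (0:ℝ)..1, ρ s) = 1)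
    (C₀ : ℝ) (hC₀ : C₀ = ∫ s in (0:ℝ)..1, ρ s * s)
    (h ε η lam M : ℝ) (hh : 0 < h) (hε : 0 < ε) (hη : 0 < η)
    (hlam : 0 < lam) (hM : 0 < M)
    (d : ℕ)
    (g : ℝ × EuclideanSpace ℝ (Fin d) → EuclideanSpace ℝ (Fin d))
    (hgc : Continuous g)
    (hgM : ∀ p, ‖g p‖ ≤ M)
    (hgLip : ∀ t x y, ‖g (t, x) - g (t, y)‖ ≤ lam * ‖x - y‖)
    (v : ℝ → EuclideanSpace ℝ (Fin d))
    (hv : ∀ t, 0 ≤ t → HasDerivAt v ((h * ε) • g (t, v t)) t)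
    (t : ℝ) (ht0 : 0 ≤ t) (ht1 : t ≤ 1 / ε) :
    ‖(1/η) • ∫ s in (0:ℝ)..η, ρ (s/η) •
        ∫ τ in (0:ℝ)..t, (g (τ + s, v (τ + s)) - g (τ + s, v τ))‖
      ≤ C₀ * h * η * lam * M := by
  subst hC₀
  exact kernel_average_R2_bound_general (hρc.intervalIntegrable 0 1) (fun s _ ↦ hρ0 s)
    hh.le hε hη hlam.le hgM hgLip hv ht0 ht1
end

section
/- Fix constants h, ε, η, λ, M > 0 and d ∈ ℕ. Let g : ℝ × ℝ^d → ℝ^d be continuous with ‖g(t,x)‖ ≤ M for all (t,x) and ‖g(t,x) − g(t,y)‖ ≤ λ·‖x − y‖ for all t, x, y. Let v : ℝ → ℝ^d be differentiable with v'(t) = h·ε·g(t, v(t)) for all t ≥ 0, and define φ(t) = ∫₀^t g(τ, v(τ)) dτ. Then for every t with 0 ≤ t ≤ 1/ε, ‖(1/η)·∫₀^η ρ(s/η)·φ(t+s) ds − ∫₀^t (1/η)·∫₀^η ρ(s/η)·g(τ+s, v(τ)) ds dτ‖ ≤ C₀·(1 + λ·h)·M·η. -/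
/-!
For fixed `s ≥ 0`, split `φ (t + s) = ∫₀^s g(τ, v τ) dτ + ∫₀^t g(τ + s, v (τ + s)) dτ`. The first
term is at most `M * s`. Since `v` is `h * ε * M`-Lipschitz on `[0, ∞)`, replacing `v (τ + s)` by
`v τ` in the second one costs at most `lam * (h * ε * M * s) * t ≤ lam * h * M * s`. By Fubini, the
quantity to bound is the kernel average of these differences, and the kernel average of `s` is
`C₀ * η`.
-/

open MeasureTheory Set
open scoped NNReal Interval

variable {E : Type*} [NormedAddCommGroup E] [NormedSpace ℝ E]

lemma intervalIntegral_smul_swap {k : ℝ → ℝ} {F : ℝ → ℝ → E} {a b c d : ℝ}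
    (hk : IntervalIntegrable k volume c d)
    (hF : ContinuousOn (Function.uncurry F) ([[a, b]] ×ˢ [[c, d]])) :
    ∫ x in a..b, ∫ y in c..d, k y • F x y = ∫ y in c..d, k y • ∫ x in a..b, F x y := by
  have hk_prod : IntegrableOn (fun p : ℝ × ℝ => k p.2) (Ι a b ×ˢ Ι c d) := by
    rw [IntegrableOn, Measure.volume_eq_prod, ← Measure.prod_restrict]
    have : IsFiniteMeasure (volume.restrict (Ι a b)) :=
      Real.isFiniteMeasure_restrict_Ioc (min a b) (max a b)
    exact hk.def'.comp_snd _
  have hkF : IntegrableOn (Function.uncurry fun x y => k y • F x y) (Ι a b ×ˢ Ι c d) :=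
    hk_prod.smul_continuousOn_of_subset hF (measurableSet_uIoc.prod measurableSet_uIoc)
      (isCompact_uIcc.prod isCompact_uIcc) (prod_mono uIoc_subset_uIcc uIoc_subset_uIcc)
  simp only [intervalIntegral_intervalIntegral_swap hkF, intervalIntegral.integral_smul]

lemma norm_integral_sub_integral_le_of_shift {f k : ℝ → E} {a b s M C : ℝ}
    (hf_init : IntervalIntegrable f volume a (a + s))
    (hf_rest : IntervalIntegrable f volume (a + s) (b + s))
    (hk : IntervalIntegrable k volume a b)
    (hfM : ∀ τ ∈ Ι a (a + s), ‖f τ‖ ≤ M) (hfk : ∀ τ ∈ Ι a b, ‖f (τ + s) - k τ‖ ≤ C) :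
    ‖(∫ τ in a..(b + s), f τ) - ∫ τ in a..b, k τ‖ ≤ M * |s| + C * |b - a| := by
  have hf_shift : IntervalIntegrable (fun τ => f (τ + s)) volume a b := by
    simpa using hf_rest.comp_add_right s
  have hsplit : (∫ τ in a..(b + s), f τ) - ∫ τ in a..b, k τ
      = (∫ τ in a..(a + s), f τ) + ∫ τ in a..b, (f (τ + s) - k τ) := by
    rw [intervalIntegral.integral_sub hf_shift hk, intervalIntegral.integral_comp_add_right,
      ← intervalIntegral.integral_add_adjacent_intervals hf_init hf_rest, add_sub_assoc]
  calc ‖(∫ τ in a..(b + s), f τ) - ∫ τ in a..b, k τ‖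
      ≤ ‖∫ τ in a..(a + s), f τ‖ + ‖∫ τ in a..b, (f (τ + s) - k τ)‖ :=
        hsplit ▸ norm_add_le _ _
    _ ≤ M * |a + s - a| + C * |b - a| :=
        add_le_add (intervalIntegral.norm_integral_le_of_norm_le_const hfM)
          (intervalIntegral.norm_integral_le_of_norm_le_const hfk)
    _ = M * |s| + C * |b - a| := by rw [add_sub_cancel_left]

lemma exists_lipschitzWith_eqOn_Ici {X : Type*} [PseudoEMetricSpace X] {f : ℝ → X} {K : ℝ≥0}
    {a : ℝ} (hf : LipschitzOnWith K f (Ici a)) :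
    ∃ w : ℝ → X, LipschitzWith K w ∧ EqOn w f (Ici a) := by
  refine ⟨fun x => f (max x a), ?_, fun x hx => congrArg f (max_eq_left hx)⟩
  have hmax : LipschitzOnWith 1 (fun x : ℝ => max x a) univ :=
    (LipschitzWith.id.max_const a).lipschitzOnWith
  simpa [Function.comp_def] using hf.comp hmax fun x _ => le_max_right x a

/-- The average `(1/η) ∫₀^η ρ(s/η) f(s) ds` of `f` over the window `[0, η]` against the rescaled
kernel `ρ(·/η)/η`. No normalization of `ρ` is built in. -/
noncomputable def kernelAverage (ρ : ℝ → ℝ) (η : ℝ) (f : ℝ → E) : E :=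
  (1 / η) • ∫ s in 0..η, ρ (s / η) • f s

section kernelAverage

variable {ρ : ℝ → ℝ} {η : ℝ}

lemma intervalIntegrable_comp_div (hρ : IntervalIntegrable ρ volume 0 1) :
    IntervalIntegrable (fun s => ρ (s / η)) volume 0 η := by
  simpa [div_eq_mul_inv] using hρ.comp_mul_right (c := η⁻¹)

lemma kernelAverage_congr {f₁ f₂ : ℝ → E} (hf : EqOn f₁ f₂ [[0, η]]) :
    kernelAverage ρ η f₁ = kernelAverage ρ η f₂ := by
  unfold kernelAverage
  rw [intervalIntegral.integral_congr fun s hs => congrArg (ρ (s / η) • ·) (hf hs)]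

lemma kernelAverage_sub (hρ : IntervalIntegrable ρ volume 0 1) {f₁ f₂ : ℝ → E}
    (hf₁ : ContinuousOn f₁ [[0, η]]) (hf₂ : ContinuousOn f₂ [[0, η]]) :
    kernelAverage ρ η (fun s => f₁ s - f₂ s) = kernelAverage ρ η f₁ - kernelAverage ρ η f₂ := by
  have hρη := intervalIntegrable_comp_div (η := η) hρ
  simp only [kernelAverage, smul_sub]
  rw [intervalIntegral.integral_sub (hρη.smul_continuousOn hf₁) (hρη.smul_continuousOn hf₂),
    smul_sub]

lemma integral_kernelAverage (hρ : IntervalIntegrable ρ volume 0 1)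
    {F : ℝ → ℝ → E} {a b : ℝ}
    (hF : ContinuousOn (Function.uncurry F) ([[a, b]] ×ˢ [[0, η]])) :
    ∫ τ in a..b, kernelAverage ρ η (F τ) = kernelAverage ρ η fun s => ∫ τ in a..b, F τ s := by
  simp only [kernelAverage, intervalIntegral.integral_smul]
  rw [intervalIntegral_smul_swap (intervalIntegrable_comp_div hρ) hF]

lemma norm_kernelAverage_le_of_norm_le_mul (hρ : IntervalIntegrable ρ volume 0 1) (hη : 0 < η)
    {f : ℝ → E} {C : ℝ} (hf : ∀ s ∈ Ioc 0 η, ‖f s‖ ≤ C * s) :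
    ‖kernelAverage ρ η f‖ ≤ (∫ u in 0..1, |ρ u| * u) * C * η := by
  have hmoment : IntervalIntegrable (fun u => |ρ u| * u) volume 0 1 :=
    hρ.abs.mul_continuousOn continuousOn_id
  have hpointwise : ∀ s ∈ Ioc 0 η,
      ‖ρ (s / η) • f s‖ ≤ C * η * (|ρ (s / η)| * (s / η)) := fun s hs =>
    calc ‖ρ (s / η) • f s‖ = |ρ (s / η)| * ‖f s‖ := norm_smul _ _
      _ ≤ |ρ (s / η)| * (C * s) := mul_le_mul_of_nonneg_left (hf s hs) (abs_nonneg _)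
      _ = C * η * (|ρ (s / η)| * (s / η)) := by field_simp
  calc ‖kernelAverage ρ η f‖ = 1 / η * ‖∫ s in 0..η, ρ (s / η) • f s‖ := by
        rw [kernelAverage, norm_smul, Real.norm_of_nonneg (by positivity)]
    _ ≤ 1 / η * ∫ s in 0..η, C * η * (|ρ (s / η)| * (s / η)) := by
        gcongr
        exact intervalIntegral.norm_integral_le_of_norm_le hη.le (.of_forall hpointwise)
          ((intervalIntegrable_comp_div hmoment).const_mul _)
    _ = 1 / η * (C * η * (η * ∫ u in 0..1, |ρ u| * u)) := by
        rw [intervalIntegral.integral_const_mul,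
          intervalIntegral.integral_comp_div (fun u => |ρ u| * u) hη.ne', zero_div,
          div_self hη.ne', smul_eq_mul]
    _ = (∫ u in 0..1, |ρ u| * u) * C * η := by field_simp

end kernelAverage

section Trajectory

variable {g : ℝ × E → E} {K M L : ℝ≥0} {t : ℝ}

lemma norm_integral_sub_integral_time_shift_le (hg : Continuous g) {w : ℝ → E}
    (hgM : ∀ τ, 0 ≤ τ → ‖g (τ, w τ)‖ ≤ M)
    (hgLip : ∀ τ, 0 ≤ τ → LipschitzWith K fun x => g (τ, x))
    (hw : LipschitzWith L w) (ht : 0 ≤ t) {s : ℝ} (hs : 0 ≤ s) :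
    ‖(∫ τ in 0..(t + s), g (τ, w τ)) - ∫ τ in 0..t, g (τ + s, w τ)‖
      ≤ (M + K * L * t) * s := by
  have hwc := hw.continuous
  have hgw : Continuous fun τ => g (τ, w τ) := by fun_prop
  have hgws : Continuous fun τ => g (τ + s, w τ) := by fun_prop
  have hfreeze : ∀ τ ∈ Ι 0 t, ‖g (τ + s, w (τ + s)) - g (τ + s, w τ)‖ ≤ K * (L * s) := by
    intro τ hτ
    rw [uIoc_of_le ht] at hτ
    calc ‖g (τ + s, w (τ + s)) - g (τ + s, w τ)‖ ≤ K * ‖w (τ + s) - w τ‖ :=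
          (hgLip (τ + s) (add_nonneg hτ.1.le hs)).norm_sub_le _ _
      _ ≤ K * (L * ‖τ + s - τ‖) := by gcongr; exact hw.norm_sub_le _ _
      _ = K * (L * s) := by rw [add_sub_cancel_left, Real.norm_of_nonneg hs]
  have hinit : ∀ τ ∈ Ι 0 (0 + s), ‖g (τ, w τ)‖ ≤ M := fun τ hτ =>
    hgM τ (uIoc_of_le (le_add_of_nonneg_right hs) ▸ hτ).1.le
  calc ‖(∫ τ in 0..(t + s), g (τ, w τ)) - ∫ τ in 0..t, g (τ + s, w τ)‖
      ≤ M * |s| + K * (L * s) * |t - 0| :=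
        norm_integral_sub_integral_le_of_shift (hgw.intervalIntegrable _ _)
          (hgw.intervalIntegrable _ _) (hgws.intervalIntegrable _ _) hinit hfreeze
    _ = (M + K * L * t) * s := by
        rw [sub_zero, abs_of_nonneg hs, abs_of_nonneg ht]
        ring

lemma norm_kernelAverage_integral_sub_integral_kernelAverage_le {ρ : ℝ → ℝ} {η : ℝ}
    (hρ : IntervalIntegrable ρ volume 0 1) (hη : 0 < η) (hg : Continuous g) {w : ℝ → E}
    (hgM : ∀ τ, 0 ≤ τ → ‖g (τ, w τ)‖ ≤ M)
    (hgLip : ∀ τ, 0 ≤ τ → LipschitzWith K fun x => g (τ, x))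
    (hw : LipschitzWith L w) (ht : 0 ≤ t) :
    ‖kernelAverage ρ η (fun s => ∫ τ in 0..(t + s), g (τ, w τ)) -
        ∫ τ in 0..t, kernelAverage ρ η fun s => g (τ + s, w τ)‖
      ≤ (∫ u in 0..1, |ρ u| * u) * (M + K * L * t) * η := by
  have hwc := hw.continuous
  have hgw : Continuous fun τ => g (τ, w τ) := by fun_prop
  have hprimitive : Continuous fun s => ∫ τ in 0..(t + s), g (τ, w τ) :=
    (intervalIntegral.continuous_primitive hgw.intervalIntegrable 0).comp (by fun_prop)
  have hshifted : Continuous fun s => ∫ τ in 0..t, g (τ + s, w τ) :=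
    intervalIntegral.continuous_parametric_intervalIntegral_of_continuous' (by fun_prop) 0 t
  rw [integral_kernelAverage hρ (Continuous.continuousOn (by fun_prop)),
    ← kernelAverage_sub hρ hprimitive.continuousOn hshifted.continuousOn]
  exact norm_kernelAverage_le_of_norm_le_mul hρ hη fun s hs =>
    norm_integral_sub_integral_time_shift_le hg hgM hgLip hw ht hs.1.le

theorem kernel_average_of_integral_bound_general {ρ : ℝ → ℝ} {η κ T : ℝ}
    (hρ : IntervalIntegrable ρ volume 0 1) (hη : 0 < η) (hg : Continuous g) {v : ℝ → E}
    (hgM : ∀ τ, 0 ≤ τ → ‖g (τ, v τ)‖ ≤ M)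
    (hgLip : ∀ τ, 0 ≤ τ → LipschitzWith K fun x => g (τ, x))
    (hv : ∀ τ, 0 ≤ τ → HasDerivWithinAt v (κ • g (τ, v τ)) (Ici 0) τ)
    (ht : 0 ≤ t) (hκt : |κ| * t ≤ T) :
    ‖kernelAverage ρ η (fun s => ∫ τ in 0..(t + s), g (τ, v τ)) -
        ∫ τ in 0..t, kernelAverage ρ η fun s => g (τ + s, v τ)‖
      ≤ (∫ u in 0..1, |ρ u| * u) * (1 + K * T) * M * η := by
  have hv_lip : LipschitzOnWith (‖κ‖₊ * M) v (Ici 0) :=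
    (convex_Ici 0).lipschitzOnWith_of_nnnorm_hasDerivWithin_le hv fun τ hτ => by
      rw [nnnorm_smul]
      gcongr
      exact hgM τ hτ
  -- Only `v` on `[0, ∞)` enters, so it may be replaced by a globally Lipschitz extension.
  obtain ⟨w, hw, hwv⟩ := exists_lipschitzWith_eqOn_Ici hv_lip
  have hprimitive : EqOn (fun s => ∫ τ in 0..(t + s), g (τ, v τ))
      (fun s => ∫ τ in 0..(t + s), g (τ, w τ)) [[0, η]] := fun s hs => by
    rw [uIcc_of_le hη.le] at hs
    refine intervalIntegral.integral_congr fun τ hτ => ?_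
    rw [uIcc_of_le (add_nonneg ht hs.1)] at hτ
    simp only [hwv hτ.1]
  have haverage : EqOn (fun τ => kernelAverage ρ η fun s => g (τ + s, v τ))
      (fun τ => kernelAverage ρ η fun s => g (τ + s, w τ)) [[0, t]] := fun τ hτ => by
    rw [uIcc_of_le ht] at hτ
    simp only [hwv hτ.1]
  rw [kernelAverage_congr hprimitive, intervalIntegral.integral_congr haverage]
  calc _ ≤ (∫ u in 0..1, |ρ u| * u) * (M + K * ↑(‖κ‖₊ * M) * t) * η :=
        norm_kernelAverage_integral_sub_integral_kernelAverage_le hρ hη hg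
          (fun τ hτ => (hwv hτ).symm ▸ hgM τ hτ) hgLip hw ht
    _ = (∫ u in 0..1, |ρ u| * u) * (1 + K * (|κ| * t)) * M * η := by
        rw [NNReal.coe_mul, coe_nnnorm, Real.norm_eq_abs]
        ring
    _ ≤ (∫ u in 0..1, |ρ u| * u) * (1 + K * T) * M * η := by
        have hmoment_nonneg : 0 ≤ ∫ u in 0..1, |ρ u| * u :=
          intervalIntegral.integral_nonneg zero_le_one fun u hu => mul_nonneg (abs_nonneg _) hu.1
        gcongr

end Trajectory

/-- Lemma A.2 of the paper: for a bounded Lipschitz vector field `g`, a solution `v` of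
`v' = h·ε·g(t,v)`, and `φ(t) = ∫₀^t g(τ, v(τ)) dτ`, the kernel average of `φ` agrees with
the time integral of the kernel-averaged vector field along `v` up to `C₀·(1+λ·h)·M·η`,
for `0 ≤ t ≤ 1/ε`. -/
theorem kernel_average_of_integral_bound
    (ρ : ℝ → ℝ) (hρc : Continuous ρ) (hρ0 : ∀ s, 0 ≤ ρ s)
    (hρsupp : ∀ s, s ∉ Set.Icc (0:ℝ) 1 → ρ s = 0)
    (hρint : (∫ s in (0:ℝ)..1, ρ s) = 1)
    (C₀ : ℝ) (hC₀ : C₀ = ∫ s in (0:ℝ)..1, ρ s * s)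
    (h ε η lam M : ℝ) (hh : 0 < h) (hε : 0 < ε) (hη : 0 < η)
    (hlam : 0 < lam) (hM : 0 < M)
    (d : ℕ)
    (g : ℝ × EuclideanSpace ℝ (Fin d) → EuclideanSpace ℝ (Fin d))
    (hgc : Continuous g)
    (hgM : ∀ p, ‖g p‖ ≤ M)
    (hgLip : ∀ t x y, ‖g (t, x) - g (t, y)‖ ≤ lam * ‖x - y‖)
    (v : ℝ → EuclideanSpace ℝ (Fin d))
    (hv : ∀ t, 0 ≤ t → HasDerivAt v ((h * ε) • g (t, v t)) t)
    (φ : ℝ → EuclideanSpace ℝ (Fin d))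
    (hφ : ∀ t, φ t = ∫ τ in (0:ℝ)..t, g (τ, v τ))
    (t : ℝ) (ht0 : 0 ≤ t) (ht1 : t ≤ 1 / ε) :
    ‖((1/η) • ∫ s in (0:ℝ)..η, ρ (s/η) • φ (t + s)) -
        ∫ τ in (0:ℝ)..t, (1/η) • ∫ s in (0:ℝ)..η, ρ (s/η) • g (τ + s, v τ)‖
      ≤ C₀ * (1 + lam * h) * M * η := by
  obtain rfl : φ = fun t => ∫ τ in 0..t, g (τ, v τ) := funext hφ
  lift lam to ℝ≥0 using hlam.le
  lift M to ℝ≥0 using hM.le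
  have hgLip' (τ : ℝ) : LipschitzWith lam fun x => g (τ, x) :=
    .of_dist_le_mul fun x y => by simpa only [dist_eq_norm] using hgLip τ x y
  have hκt : |h * ε| * t ≤ h := by
    rw [abs_of_pos (mul_pos hh hε), mul_assoc]
    exact mul_le_of_le_one_right hh.le ((le_div_iff₀' hε).1 ht1)
  simpa only [kernelAverage, hC₀, abs_of_nonneg (hρ0 _)] using
    kernel_average_of_integral_bound_general (hρc.intervalIntegrable 0 1) hη hgc
      (fun _ _ => hgM _) (fun τ _ => hgLip' τ) (fun τ hτ => (hv τ hτ).hasDerivWithinAt) ht0 hκt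
end

section
/- Fix constants h, ε, η, λ, M > 0 and d ∈ ℕ. Let g : ℝ × ℝ^d → ℝ^d be continuous with ‖g(t,x)‖ ≤ M for all (t,x) and ‖g(t,x) − g(t,y)‖ ≤ λ·‖x − y‖ for all t, x, y. Define the kernel-averaged vector field g_η(t,x) = (1/η)·∫₀^η ρ(s/η)·g(t+s, x) ds. Let v, v̄ : ℝ → ℝ^d be differentiable with v'(t) = h·ε·g(t, v(t)) and v̄'(t) = h·ε·g_η(t, v̄(t)) for all t ≥ 0, and with v(0) = v̄(0). Then for every t with 0 ≤ t ≤ 1/ε, ‖v(t) − v̄(t)‖ ≤ C₀·(2 + λ·h)·M·η·h·ε·exp(h·ε·λ·t). -/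
/-!
A translate of a bounded function has almost the same integral: only the two end intervals differ.
Hence `∫ (g τ (w τ) - g (τ + s) (w τ))` is at most `2 M |s|` plus the cost `K L |s|` per unit time
of replacing `w τ` by `w (τ + s)`, where `K` and `L` are the Lipschitz constants of `g` in space and
of `w`. Averaging over the shift `s` with Fubini bounds the error `∫ (g - averagedField μ g)` along
`w` by the first moment of `μ`. A solution `w` of the averaged equation is `M`-Lipschitz, so
`‖v - w‖` satisfies a Grönwall inequality in integral form whose inhomogeneity is this error.
-/

open MeasureTheory Set
open scoped NNReal

theorem le_mul_exp_of_le_add_mul_integral {φ : ℝ → ℝ} {a b K L : ℝ}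
    (hφ : ContinuousOn φ (Icc a b)) (hL : 0 ≤ L)
    (hle : ∀ t ∈ Icc a b, φ t ≤ K + L * ∫ τ in a..t, φ τ) :
    ∀ t ∈ Icc a b, φ t ≤ K * Real.exp (L * (t - a)) := by
  intro t ht
  set F : ℝ → ℝ := fun r => K + L * ∫ τ in a..r, φ τ
  have hF_deriv : ∀ r ∈ Icc a b, HasDerivWithinAt F (L * φ r) (Icc a b) r := fun r hr =>
    have : Fact (r ∈ Icc a b) := ⟨hr⟩
    ((intervalIntegral.integral_hasDerivWithinAt_right
      (hφ.mono (Icc_subset_Icc_right hr.2) |>.intervalIntegrable_of_Icc hr.1)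
      (hφ.stronglyMeasurableAtFilter_nhdsWithin measurableSet_Icc r)
      (hφ r hr)).const_mul L).const_add K
  have hF_le := le_gronwallBound_of_liminf_deriv_right_le (δ := K) (K := L) (ε := 0)
    (fun r hr => (hF_deriv r hr).continuousWithinAt)
    (fun r hr _ => ((hF_deriv r (Ico_subset_Icc_self hr)).mono_of_mem_nhdsWithin
      (Icc_mem_nhdsGE_of_mem hr)).liminf_right_slope_le)
    (by simp [F])
    (fun r hr => by simpa using mul_le_mul_of_nonneg_left (hle r (Ico_subset_Icc_self hr)) hL)
  calc φ t ≤ F t := hle t ht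
    _ ≤ gronwallBound K L 0 (t - a) := hF_le t ht
    _ = K * Real.exp (L * (t - a)) := gronwallBound_ε0 ..

theorem lipschitzWith_IccExtend {α : Type*} [PseudoEMetricSpace α] {L : ℝ≥0} {a b : ℝ}
    (hab : a ≤ b) {f : Icc a b → α} (hf : LipschitzWith L f) :
    LipschitzWith L (IccExtend hab f) :=
  mul_one L ▸ hf.comp (LipschitzWith.projIcc hab)

section BanachSpace

variable {E : Type*} [NormedAddCommGroup E] [NormedSpace ℝ E]

section IntegralCurve

variable {g : ℝ → E → E} {v : ℝ → E}

theorem lipschitzOnWith_of_isIntegralCurveOn {M : ℝ≥0} {s : Set ℝ} (hs : Convex ℝ s)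
    (hgM : ∀ t x, ‖g t x‖ ≤ M) (hv : IsIntegralCurveOn v g s) : LipschitzOnWith M v s :=
  hs.lipschitzOnWith_of_nnnorm_hasDerivWithin_le hv fun t _ => hgM t (v t)

theorem integral_eq_sub_of_isIntegralCurveOn [CompleteSpace E] {a b : ℝ}
    (hg : Continuous (Function.uncurry g)) (hab : a ≤ b) (hv : IsIntegralCurveOn v g (Icc a b)) :
    ∫ t in a..b, g t (v t) = v b - v a := by
  have hvc := hv.continuousOn
  exact intervalIntegral.integral_eq_sub_of_hasDerivAt_of_le hab hvc
    (fun t ht => (hv t (Ioo_subset_Icc_self ht)).hasDerivAt (Icc_mem_nhds ht.1 ht.2))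
    (ContinuousOn.intervalIntegrable_of_Icc hab (by fun_prop))

end IntegralCurve

theorem norm_integral_sub_integral_comp_add_right_le {f : ℝ → E} {M : ℝ}
    (hf : Continuous f) (hfM : ∀ t, ‖f t‖ ≤ M) (a b s : ℝ) :
    ‖(∫ t in a..b, f t) - ∫ t in a..b, f (t + s)‖ ≤ 2 * M * |s| := by
  have hint (a b) : IntervalIntegrable f volume a b := hf.intervalIntegrable a b
  have hend (c : ℝ) : ‖∫ t in c..(c + s), f t‖ ≤ M * |s| := by
    simpa using intervalIntegral.norm_integral_le_of_norm_le_const (a := c) (b := c + s)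
      fun t _ => hfM t
  calc ‖(∫ t in a..b, f t) - ∫ t in a..b, f (t + s)‖
      = ‖(∫ t in a..(a + s), f t) - ∫ t in b..(b + s), f t‖ := by
        rw [intervalIntegral.integral_comp_add_right,
          intervalIntegral.integral_interval_sub_interval_comm (hint _ _) (hint _ _) (hint _ _)]
    _ ≤ M * |s| + M * |s| := norm_sub_le_of_le (hend a) (hend b)
    _ = 2 * M * |s| := by ring

variable {g : ℝ → E → E} {v w : ℝ → E} {K L : ℝ≥0} {M : ℝ} {μ : Measure ℝ} {a b : ℝ}

theorem norm_integral_sub_translate_le (hg : Continuous (Function.uncurry g))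
    (hgM : ∀ t x, ‖g t x‖ ≤ M) (hgK : ∀ t, LipschitzWith K (g t)) (hw : LipschitzWith L w)
    (a b s : ℝ) :
    ‖∫ t in a..b, (g t (w t) - g (t + s) (w t))‖ ≤ (2 * M + K * L * |b - a|) * |s| := by
  have hwc : Continuous w := hw.continuous
  have hf : Continuous fun t => g t (w t) := by fun_prop
  have hsplit : ∫ t in a..b, (g t (w t) - g (t + s) (w t))
      = ((∫ t in a..b, g t (w t)) - ∫ t in a..b, g (t + s) (w (t + s)))
        + ∫ t in a..b, (g (t + s) (w (t + s)) - g (t + s) (w t)) := by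
    rw [← intervalIntegral.integral_sub, ← intervalIntegral.integral_add]
    · simp only [sub_add_sub_cancel]
    all_goals exact Continuous.intervalIntegrable (by fun_prop) _ _
  have hdrift : ‖∫ t in a..b, (g (t + s) (w (t + s)) - g (t + s) (w t))‖
      ≤ K * (L * |s|) * |b - a| := by
    refine intervalIntegral.norm_integral_le_of_norm_le_const fun t _ => ?_
    have hws : ‖w (t + s) - w t‖ ≤ L * |s| := by simpa using hw.norm_sub_le (t + s) t
    exact ((hgK _).norm_sub_le _ _).trans (by gcongr)
  calc ‖∫ t in a..b, (g t (w t) - g (t + s) (w t))‖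
      ≤ 2 * M * |s| + K * (L * |s|) * |b - a| := by
        rw [hsplit]
        exact norm_add_le_of_le (norm_integral_sub_integral_comp_add_right_le
          hf (fun t => hgM t (w t)) a b s) hdrift
    _ = (2 * M + K * L * |b - a|) * |s| := by ring

/-- The time average of the vector field `g` over a random shift of time with law `μ`. The paper's
kernel average `g_η` is the case `μ = kernelMeasure ρ η`. -/
noncomputable def averagedField (μ : Measure ℝ) (g : ℝ → E → E) (t : ℝ) (x : E) : E :=
  ∫ s, g (t + s) x ∂μ

theorem averagedField_const_smul (c : ℝ) (g : ℝ → E → E) (t : ℝ) (x : E) :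
    averagedField μ (fun t x => c • g t x) t x = c • averagedField μ g t x :=
  integral_smul c _

theorem continuous_uncurry_averagedField [IsFiniteMeasure μ] (hg : Continuous (Function.uncurry g))
    (hgM : ∀ t x, ‖g t x‖ ≤ M) : Continuous (Function.uncurry (averagedField μ g)) :=
  continuous_of_dominated (F := fun (p : ℝ × E) s => g (p.1 + s) p.2) (bound := fun _ => M)
    (fun p => Continuous.aestronglyMeasurable (by fun_prop))
    (fun p => .of_forall fun s => hgM _ _) (integrable_const M) (.of_forall fun s => by fun_prop)

theorem sub_eq_integral_sub_averagedField_add_integral_sub [IsFiniteMeasure μ] [CompleteSpace E]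
    (hg : Continuous (Function.uncurry g)) (hgM : ∀ t x, ‖g t x‖ ≤ M) (hab : a ≤ b)
    (hv : IsIntegralCurveOn v g (Icc a b))
    (hw : IsIntegralCurveOn w (averagedField μ g) (Icc a b)) (hvw : v a = w a) :
    v b - w b = (∫ t in a..b, (g t (w t) - averagedField μ g t (w t)))
      + ∫ t in a..b, (g t (v t) - g t (w t)) := by
  have hvc := hv.continuousOn
  have hwc := hw.continuousOn
  have hg' : Continuous (Function.uncurry (averagedField μ g)) :=
    continuous_uncurry_averagedField hg hgM
  have hint {f : ℝ → E} (hf : ContinuousOn f (Icc a b)) : IntervalIntegrable f volume a b :=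
    hf.intervalIntegrable_of_Icc hab
  rw [intervalIntegral.integral_sub (hint (by fun_prop)) (hint (by fun_prop)),
    intervalIntegral.integral_sub (hint (by fun_prop)) (hint (by fun_prop)),
    integral_eq_sub_of_isIntegralCurveOn hg hab hv,
    integral_eq_sub_of_isIntegralCurveOn hg' hab hw, hvw]
  abel

section ProbabilityMeasure

variable [IsProbabilityMeasure μ]

theorem norm_averagedField_le (hgM : ∀ t x, ‖g t x‖ ≤ M) (t : ℝ) (x : E) :
    ‖averagedField μ g t x‖ ≤ M := by
  simpa [averagedField] using norm_integral_le_of_norm_le_const (μ := μ)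
    (.of_forall fun s => hgM (t + s) x)

variable [CompleteSpace E]

theorem sub_averagedField_eq_integral (hg : Continuous (Function.uncurry g))
    (hgM : ∀ t x, ‖g t x‖ ≤ M) (t : ℝ) (x : E) :
    g t x - averagedField μ g t x = ∫ s, (g t x - g (t + s) x) ∂μ := by
  have hint : Integrable (fun s => g (t + s) x) μ :=
    .of_bound (Continuous.aestronglyMeasurable (by fun_prop)) M (.of_forall fun s => hgM _ _)
  rw [integral_sub (integrable_const _) hint]
  simp [averagedField]

theorem integral_sub_averagedField_eq_integral_integral (hg : Continuous (Function.uncurry g))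
    (hgM : ∀ t x, ‖g t x‖ ≤ M) (hw : Continuous w) (a b : ℝ) :
    ∫ t in a..b, (g t (w t) - averagedField μ g t (w t))
      = ∫ s, (∫ t in a..b, (g t (w t) - g (t + s) (w t))) ∂μ := by
  simp_rw [sub_averagedField_eq_integral hg hgM]
  have : IsFiniteMeasure (volume.restrict (uIoc a b)) := isFiniteMeasure_restrict.2 (by simp)
  have hint : Integrable (Function.uncurry fun t s => g t (w t) - g (t + s) (w t))
      ((volume.restrict (uIoc a b)).prod μ) :=
    .of_bound (Continuous.aestronglyMeasurable (by fun_prop)) (M + M)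
      (.of_forall fun p => norm_sub_le_of_le (hgM _ _) (hgM _ _))
  simp_rw [intervalIntegral.intervalIntegral_eq_integral_uIoc, integral_smul,
    integral_integral_swap hint]

theorem norm_integral_sub_averagedField_le_of_lipschitzWith (hg : Continuous (Function.uncurry g))
    (hgM : ∀ t x, ‖g t x‖ ≤ M) (hgK : ∀ t, LipschitzWith K (g t)) (hw : LipschitzWith L w)
    (hμ : Integrable (fun s => |s|) μ) (a b : ℝ) :
    ‖∫ t in a..b, (g t (w t) - averagedField μ g t (w t))‖
      ≤ (2 * M + K * L * |b - a|) * ∫ s, |s| ∂μ := by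
  rw [integral_sub_averagedField_eq_integral_integral hg hgM hw.continuous, ← integral_const_mul]
  exact norm_integral_le_of_norm_le (hμ.const_mul _)
    (.of_forall fun s => norm_integral_sub_translate_le hg hgM hgK hw a b s)

theorem norm_integral_sub_averagedField_le_of_lipschitzOnWith
    (hg : Continuous (Function.uncurry g)) (hgM : ∀ t x, ‖g t x‖ ≤ M)
    (hgK : ∀ t, LipschitzWith K (g t)) (hμ : Integrable (fun s => |s|) μ) (hab : a ≤ b)
    (hw : LipschitzOnWith L w (Icc a b)) :
    ‖∫ t in a..b, (g t (w t) - averagedField μ g t (w t))‖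
      ≤ (2 * M + K * L * (b - a)) * ∫ s, |s| ∂μ := by
  -- Time shifts leave `[a, b]`, so `w` is first extended by its end values.
  set w' : ℝ → E := IccExtend hab ((Icc a b).domRestrict w)
  have hw' : LipschitzWith L w' := lipschitzWith_IccExtend hab hw.to_restrict
  have hww' : EqOn w w' (Icc a b) := fun t ht =>
    (IccExtend_of_mem hab ((Icc a b).domRestrict w) ht).symm
  have hcongr : ∫ t in a..b, (g t (w t) - averagedField μ g t (w t))
      = ∫ t in a..b, (g t (w' t) - averagedField μ g t (w' t)) :=
    intervalIntegral.integral_congr fun t ht => by simp only [hww' (uIcc_of_le hab ▸ ht)]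
  rw [hcongr, ← abs_of_nonneg (sub_nonneg.2 hab)]
  exact norm_integral_sub_averagedField_le_of_lipschitzWith hg hgM hgK hw' hμ a b

theorem norm_sub_le_add_mul_integral_norm_sub {M : ℝ≥0} (hg : Continuous (Function.uncurry g))
    (hgM : ∀ t x, ‖g t x‖ ≤ M) (hgK : ∀ t, LipschitzWith K (g t))
    (hμ : Integrable (fun s => |s|) μ) (hab : a ≤ b) (hv : IsIntegralCurveOn v g (Icc a b))
    (hw : IsIntegralCurveOn w (averagedField μ g) (Icc a b)) (hvw : v a = w a) :
    ‖v b - w b‖ ≤ (2 + K * (b - a)) * M * (∫ s, |s| ∂μ) + K * ∫ t in a..b, ‖v t - w t‖ := by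
  have hvw_cont : ContinuousOn (fun t => ‖v t - w t‖) (Icc a b) :=
    (hv.continuousOn.sub hw.continuousOn).norm
  have hw_lip : LipschitzOnWith M w (Icc a b) :=
    lipschitzOnWith_of_isIntegralCurveOn (convex_Icc a b) (norm_averagedField_le hgM) hw
  have hlip : ‖∫ t in a..b, (g t (v t) - g t (w t))‖ ≤ K * ∫ t in a..b, ‖v t - w t‖ := by
    rw [← intervalIntegral.integral_const_mul]
    exact intervalIntegral.norm_integral_le_of_norm_le hab
      (.of_forall fun t _ => (hgK t).norm_sub_le _ _)
      ((hvw_cont.const_mul (K : ℝ)).intervalIntegrable_of_Icc hab)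
  calc ‖v b - w b‖
      ≤ (2 * M + K * M * (b - a)) * (∫ s, |s| ∂μ) + K * ∫ t in a..b, ‖v t - w t‖ := by
        rw [sub_eq_integral_sub_averagedField_add_integral_sub hg hgM hab hv hw hvw]
        exact norm_add_le_of_le
          (norm_integral_sub_averagedField_le_of_lipschitzOnWith hg hgM hgK hμ hab hw_lip) hlip
    _ = (2 + K * (b - a)) * M * (∫ s, |s| ∂μ) + K * ∫ t in a..b, ‖v t - w t‖ := by ring

theorem norm_sub_le_of_isIntegralCurveOn_averagedField {M : ℝ≥0}
    (hg : Continuous (Function.uncurry g)) (hgM : ∀ t x, ‖g t x‖ ≤ M)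
    (hgK : ∀ t, LipschitzWith K (g t)) (hμ : Integrable (fun s => |s|) μ) (hab : a ≤ b)
    (hv : IsIntegralCurveOn v g (Icc a b))
    (hw : IsIntegralCurveOn w (averagedField μ g) (Icc a b)) (hvw : v a = w a) :
    ‖v b - w b‖ ≤ (2 + K * (b - a)) * M * (∫ s, |s| ∂μ) * Real.exp (K * (b - a)) := by
  refine le_mul_exp_of_le_add_mul_integral (φ := fun t => ‖v t - w t‖)
    (hv.continuousOn.sub hw.continuousOn).norm K.coe_nonneg (fun t ht => ?_) b (right_mem_Icc.2 hab)
  have hsub : Icc a t ⊆ Icc a b := Icc_subset_Icc_right ht.2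
  refine (norm_sub_le_add_mul_integral_norm_sub hg hgM hgK hμ ht.1 (hv.mono hsub)
    (hw.mono hsub) hvw).trans ?_
  gcongr
  exact ht.2

end ProbabilityMeasure

end BanachSpace

section KernelMeasure

/-- The law of the time shift in the paper's `g_η`: for `0 < η`, the measure on `[0, η]` with
density `s ↦ ρ (s / η) / η`. It is encoded as the push-forward under scaling by `η` of the
measure with density `ρ` on `(0, 1]`; negative values of `ρ` are cut off at `0`. -/
noncomputable def kernelMeasure (ρ : ℝ → ℝ) (η : ℝ) : Measure ℝ :=
  ((volume.restrict (Ioc 0 1)).withDensity fun s => ENNReal.ofReal (ρ s)).map (η * ·)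

variable {ρ : ℝ → ℝ} {η : ℝ}

theorem isProbabilityMeasure_kernelMeasure (hρ0 : ∀ s ∈ Ioc (0 : ℝ) 1, 0 ≤ ρ s)
    (hρint : ∫ s in (0 : ℝ)..1, ρ s = 1) (η : ℝ) : IsProbabilityMeasure (kernelMeasure ρ η) := by
  have hρi : IntegrableOn ρ (Ioc 0 1) :=
    (intervalIntegral.intervalIntegrable_of_integral_ne_zero (by simp [hρint])).1
  have : IsProbabilityMeasure
      ((volume.restrict (Ioc 0 1)).withDensity fun s => ENNReal.ofReal (ρ s)) := ⟨by
    rw [withDensity_apply _ .univ, Measure.restrict_univ, ← ofReal_integral_eq_lintegral_ofReal hρi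
      (ae_restrict_of_forall_mem measurableSet_Ioc hρ0),
      ← intervalIntegral.integral_of_le zero_le_one, hρint, ENNReal.ofReal_one]⟩
  exact Measure.isProbabilityMeasure_map (by fun_prop)

theorem ae_kernelMeasure_mem_Icc (hη : 0 ≤ η) : ∀ᵐ s ∂kernelMeasure ρ η, s ∈ Icc 0 η := by
  refine (ae_map_iff (by fun_prop) measurableSet_Icc).2 ?_
  refine (withDensity_absolutelyContinuous _ _).ae_le ?_
  refine ae_restrict_of_forall_mem measurableSet_Ioc fun s hs => ?_
  exact ⟨mul_nonneg hη hs.1.le, mul_le_of_le_one_right hη hs.2⟩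

theorem integrable_abs_kernelMeasure [IsFiniteMeasure (kernelMeasure ρ η)] (hη : 0 ≤ η) :
    Integrable (fun s => |s|) (kernelMeasure ρ η) :=
  .of_mem_Icc 0 η (by fun_prop) ((ae_kernelMeasure_mem_Icc hη).mono fun s hs => by
    rwa [abs_of_nonneg hs.1])

theorem integral_kernelMeasure {E : Type*} [NormedAddCommGroup E] [NormedSpace ℝ E]
    (hρ0 : ∀ s ∈ Ioc (0 : ℝ) 1, 0 ≤ ρ s) (hρi : IntervalIntegrable ρ volume 0 1)
    (hη : η ≠ 0) (f : ℝ → E) :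
    ∫ s, f s ∂kernelMeasure ρ η = ∫ s in (0 : ℝ)..1, ρ s • f (η * s) := by
  rw [kernelMeasure, (measurableEmbedding_mulLeft₀ hη).integral_map,
    integral_withDensity_eq_integral_toReal_smul₀ hρi.1.aemeasurable.ennreal_ofReal (by simp),
    intervalIntegral.integral_of_le zero_le_one]
  refine setIntegral_congr_fun measurableSet_Ioc fun s hs => ?_
  simp only [ENNReal.toReal_ofReal (hρ0 s hs)]

theorem averagedField_kernelMeasure {E : Type*} [NormedAddCommGroup E] [NormedSpace ℝ E]
    (hρ0 : ∀ s ∈ Ioc (0 : ℝ) 1, 0 ≤ ρ s) (hρi : IntervalIntegrable ρ volume 0 1)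
    (hη : η ≠ 0) (g : ℝ → E → E) (t : ℝ) (x : E) :
    averagedField (kernelMeasure ρ η) g t x
      = (1 / η) • ∫ s in (0 : ℝ)..η, ρ (s / η) • g (t + s) x := by
  have hscale := intervalIntegral.integral_comp_mul_left (a := 0) (b := 1)
    (fun s => ρ (s / η) • g (t + s) x) hη
  simp only [mul_zero, mul_one, mul_div_cancel_left₀ _ hη] at hscale
  rw [averagedField, integral_kernelMeasure hρ0 hρi hη, hscale, one_div]

theorem integral_abs_kernelMeasure (hρ0 : ∀ s ∈ Ioc (0 : ℝ) 1, 0 ≤ ρ s)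
    (hρi : IntervalIntegrable ρ volume 0 1) (hη : 0 < η) :
    ∫ s, |s| ∂kernelMeasure ρ η = η * ∫ s in (0 : ℝ)..1, ρ s * s := by
  rw [integral_kernelMeasure hρ0 hρi hη.ne', ← intervalIntegral.integral_const_mul]
  refine intervalIntegral.integral_congr fun s hs => ?_
  have hs0 : 0 ≤ s := (uIcc_of_le (zero_le_one' ℝ) ▸ hs).1
  simp only [smul_eq_mul, abs_of_nonneg (mul_nonneg hη.le hs0)]
  ring

end KernelMeasure

theorem norm_sub_le_of_hasDerivWithinAt_kernelAverage {E : Type*}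
    [NormedAddCommGroup E] [NormedSpace ℝ E] [CompleteSpace E] {ρ : ℝ → ℝ}
    (hρ0 : ∀ s ∈ Ioc (0 : ℝ) 1, 0 ≤ ρ s)
    (hρint : ∫ s in (0 : ℝ)..1, ρ s = 1) {c η lam M : ℝ} (hc : 0 ≤ c) (hη : 0 < η)
    (hlam : 0 ≤ lam) {g : ℝ × E → E} (hgc : Continuous g) (hgM : ∀ p, ‖g p‖ ≤ M)
    (hgLip : ∀ t x y, ‖g (t, x) - g (t, y)‖ ≤ lam * ‖x - y‖) {v vb : ℝ → E} {t : ℝ} (ht : 0 ≤ t)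
    (hv : ∀ r ∈ Icc 0 t, HasDerivWithinAt v (c • g (r, v r)) (Icc 0 t) r)
    (hvb : ∀ r ∈ Icc 0 t, HasDerivWithinAt vb
      (c • ((1 / η) • ∫ s in (0 : ℝ)..η, ρ (s / η) • g (r + s, vb r))) (Icc 0 t) r)
    (hv0 : v 0 = vb 0) :
    ‖v t - vb t‖ ≤ (∫ s in (0 : ℝ)..1, ρ s * s) * (2 + c * lam * t) * M * η * c
      * Real.exp (c * lam * t) := by
  have hM : 0 ≤ M := (norm_nonneg _).trans (hgM 0)
  lift c to ℝ≥0 using hc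
  lift lam to ℝ≥0 using hlam
  lift M to ℝ≥0 using hM
  set G : ℝ → E → E := fun r x => (c : ℝ) • g (r, x)
  have hGM (r x) : ‖G r x‖ ≤ (c * M : ℝ≥0) := by
    simpa [G, norm_smul] using mul_le_mul_of_nonneg_left (hgM (r, x)) c.coe_nonneg
  have hGLip (r) : LipschitzWith (c * lam) (G r) := .of_dist_le_mul fun x y => by
    simpa [G, dist_eq_norm, ← smul_sub, norm_smul, mul_assoc] using
      mul_le_mul_of_nonneg_left (hgLip r x y) c.coe_nonneg
  have hρi : IntervalIntegrable ρ volume 0 1 :=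
    intervalIntegral.intervalIntegrable_of_integral_ne_zero (by simp [hρint])
  have := isProbabilityMeasure_kernelMeasure hρ0 hρint η
  have hvb' : IsIntegralCurveOn vb (averagedField (kernelMeasure ρ η) G) (Icc 0 t) := fun r hr => by
    rw [averagedField_const_smul c fun r x => g (r, x),
      averagedField_kernelMeasure hρ0 hρi hη.ne']
    exact hvb r hr
  have hbound := norm_sub_le_of_isIntegralCurveOn_averagedField (hgc.const_smul (c : ℝ)) hGM hGLip
    (integrable_abs_kernelMeasure hη.le) ht hv hvb' hv0
  rw [integral_abs_kernelMeasure hρ0 hρi hη, sub_zero] at hbound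
  push_cast at hbound
  linarith

theorem averaging_error_bound_general {E : Type*} [NormedAddCommGroup E] [NormedSpace ℝ E]
    [CompleteSpace E] {ρ : ℝ → ℝ} (hρ0 : ∀ s ∈ Ioc (0 : ℝ) 1, 0 ≤ ρ s)
    (hρint : ∫ s in (0 : ℝ)..1, ρ s = 1) {h ε η lam M : ℝ} (hh : 0 ≤ h) (hε : 0 < ε) (hη : 0 < η)
    (hlam : 0 ≤ lam) {g : ℝ × E → E} (hgc : Continuous g) (hgM : ∀ p, ‖g p‖ ≤ M)
    (hgLip : ∀ t x y, ‖g (t, x) - g (t, y)‖ ≤ lam * ‖x - y‖) {v vb : ℝ → E} {t : ℝ} (ht0 : 0 ≤ t)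
    (ht1 : t ≤ 1 / ε)
    (hv : ∀ r ∈ Icc 0 t, HasDerivWithinAt v ((h * ε) • g (r, v r)) (Icc 0 t) r)
    (hvb : ∀ r ∈ Icc 0 t, HasDerivWithinAt vb
      ((h * ε) • ((1 / η) • ∫ s in (0 : ℝ)..η, ρ (s / η) • g (r + s, vb r))) (Icc 0 t) r)
    (hv0 : v 0 = vb 0) :
    ‖v t - vb t‖ ≤ (∫ s in (0 : ℝ)..1, ρ s * s) * (2 + lam * h) * M * η * h * ε
      * Real.exp (h * ε * lam * t) := by
  have hM : 0 ≤ M := (norm_nonneg _).trans (hgM 0)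
  have hmoment : 0 ≤ ∫ s in (0 : ℝ)..1, ρ s * s := by
    rw [intervalIntegral.integral_of_le zero_le_one]
    exact setIntegral_nonneg measurableSet_Ioc fun s hs => mul_nonneg (hρ0 s hs) hs.1.le
  have hdrift : h * ε * lam * t ≤ lam * h := by
    have := mul_le_mul_of_nonneg_left ((le_div_iff₀' hε).1 ht1) (mul_nonneg hh hlam)
    linarith
  refine (norm_sub_le_of_hasDerivWithinAt_kernelAverage hρ0 hρint (mul_nonneg hh hε.le) hη hlam
    hgc hgM hgLip ht0 hv hvb hv0).trans ?_
  rw [← mul_assoc _ h ε]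
  gcongr

/-- Lemma 4.1 of the paper (proved in the appendix): the difference between the exact
solution of the highly oscillatory ODE `v' = h·ε·g(t,v)` and the solution of the
kernel-averaged ODE `v̄' = h·ε·g_η(t,v̄)` with the same initial condition satisfies
`‖v(t) − v̄(t)‖ ≤ C₀·(2+λ·h)·M·η·h·ε·exp(h·ε·λ·t)` on `0 ≤ t ≤ 1/ε`. -/
theorem averaging_error_bound
    (ρ : ℝ → ℝ) (hρc : Continuous ρ) (hρ0 : ∀ s, 0 ≤ ρ s)
    (hρsupp : ∀ s, s ∉ Set.Icc (0:ℝ) 1 → ρ s = 0)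
    (hρint : (∫ s in (0:ℝ)..1, ρ s) = 1)
    (C₀ : ℝ) (hC₀ : C₀ = ∫ s in (0:ℝ)..1, ρ s * s)
    (h ε η lam M : ℝ) (hh : 0 < h) (hε : 0 < ε) (hη : 0 < η)
    (hlam : 0 < lam) (hM : 0 < M)
    (d : ℕ)
    (g : ℝ × EuclideanSpace ℝ (Fin d) → EuclideanSpace ℝ (Fin d))
    (hgc : Continuous g)
    (hgM : ∀ p, ‖g p‖ ≤ M)
    (hgLip : ∀ t x y, ‖g (t, x) - g (t, y)‖ ≤ lam * ‖x - y‖)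
    (v vb : ℝ → EuclideanSpace ℝ (Fin d))
    (hv : ∀ t, 0 ≤ t → HasDerivAt v ((h * ε) • g (t, v t)) t)
    (hvb : ∀ t, 0 ≤ t → HasDerivAt vb
      ((h * ε) • ((1/η) • ∫ s in (0:ℝ)..η, ρ (s/η) • g (t + s, vb t))) t)
    (hv0 : v 0 = vb 0)
    (t : ℝ) (ht0 : 0 ≤ t) (ht1 : t ≤ 1 / ε) :
    ‖v t - vb t‖ ≤ C₀ * (2 + lam * h) * M * η * h * ε * Real.exp (h * ε * lam * t) := by
  exact hC₀ ▸ averaging_error_bound_general (fun s _ => hρ0 s) hρint hh.le hε hη hlam.le hgc hgM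
    hgLip ht0 ht1 (fun r hr => (hv r hr.1).hasDerivWithinAt)
    (fun r hr => (hvb r hr.1).hasDerivWithinAt) hv0
end

section
/- Let C ≥ 0, ΔT > 0, γ ≥ 0, B ≥ 0, and let e : ℕ → ℕ → ℝ be a doubly indexed family of nonnegative reals satisfying: e(0, k) = 0 for all k; e(n, 0) ≤ γ·B for all n; and e(n, k) ≤ (1 + C·ΔT)·e(n−1, k) + γ·e(n−1, k−1) for all n ≥ 1 and k ≥ 1. Then for all n and k, e(n, k) ≤ (1 + C·ΔT)^n · (n choose (k+1)) · γ^(k+1) · B. -/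
/-!
With `q = 1 + C * ΔT ≥ 1`, the right-hand side `q ^ n * n.choose (k + 1) * γ ^ (k + 1) * B`
satisfies the recursion with the inequality reversed: the two terms carry `q ^ (n + 1)` and
`q ^ n ≤ q ^ (n + 1)`, and Pascal's rule adds the binomial coefficients. As it also dominates `e`
on the row `n = 0` and the column `k = 0`, and the recursion is monotone, it dominates `e`
everywhere.
-/

theorem le_of_monotone_double_recursion {α : Type*} [Preorder α] {F : α × α → α}
    (hF : Monotone F) {e M : ℕ → ℕ → α}
    (hrow : ∀ k, e 0 k ≤ M 0 k) (hcol : ∀ n, e (n + 1) 0 ≤ M (n + 1) 0)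
    (he : ∀ n k, e (n + 1) (k + 1) ≤ F (e n (k + 1), e n k))
    (hM : ∀ n k, F (M n (k + 1), M n k) ≤ M (n + 1) (k + 1)) (n k : ℕ) :
    e n k ≤ M n k := by
  induction n generalizing k with
  | zero => exact hrow k
  | succ n ih =>
    cases k with
    | zero => exact hcol n
    | succ k =>
      calc e (n + 1) (k + 1) ≤ F (e n (k + 1), e n k) := he n k
        _ ≤ F (M n (k + 1), M n k) := hF ⟨ih (k + 1), ih k⟩
        _ ≤ M (n + 1) (k + 1) := hM n k

/-- The binomial bound for the Parareal error after `k` corrections at coarse step `n`, where `q` is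
the Lipschitz constant of the coarse propagator, `γ` the error factor of a single step and `γ * B`
the bound for the initial iterate. The lower index of the binomial coefficient is `k + 1` because
the initial iterate already contributes one factor `γ`. -/
def pararealMajorant {R : Type*} [Semiring R] (q γ B : R) (n k : ℕ) : R :=
  q ^ n * n.choose (k + 1) * γ ^ (k + 1) * B

namespace pararealMajorant

theorem zero_left {R : Type*} [Semiring R] (q γ B : R) (k : ℕ) :
    pararealMajorant q γ B 0 k = 0 := by
  simp [pararealMajorant]

variable {R : Type*} [CommSemiring R] [PartialOrder R] [IsOrderedRing R] {q γ B : R}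

theorem mul_le_succ_zero (hq : 1 ≤ q) (hγB : 0 ≤ γ * B) (n : ℕ) :
    γ * B ≤ pararealMajorant q γ B (n + 1) 0 := by
  have one_le_choose : (1 : R) ≤ ((n + 1).choose 1 : ℕ) := by
    rw [Nat.choose_one_right, Nat.cast_succ]
    exact le_add_of_nonneg_left n.cast_nonneg
  have one_le_coeff : 1 ≤ q ^ (n + 1) * ((n + 1).choose 1 : ℕ) :=
    one_le_mul_of_one_le_of_one_le (one_le_pow₀ hq) one_le_choose
  calc γ * B ≤ q ^ (n + 1) * ((n + 1).choose 1 : ℕ) * (γ * B) :=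
        le_mul_of_one_le_left hγB one_le_coeff
    _ = pararealMajorant q γ B (n + 1) 0 := by
        simp only [pararealMajorant, zero_add, pow_one, mul_assoc]

theorem recursion_le_succ_succ (hq : 1 ≤ q) (hγ : 0 ≤ γ) (hB : 0 ≤ B) (n k : ℕ) :
    q * pararealMajorant q γ B n (k + 1) + γ * pararealMajorant q γ B n k ≤
      pararealMajorant q γ B (n + 1) (k + 1) := by
  have pow_le_pow_succ : q ^ n ≤ q ^ (n + 1) := pow_le_pow_right₀ hq n.le_succ
  calc q * pararealMajorant q γ B n (k + 1) + γ * pararealMajorant q γ B n k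
      = q ^ (n + 1) * n.choose (k + 2) * γ ^ (k + 2) * B
          + q ^ n * n.choose (k + 1) * γ ^ (k + 2) * B := by
        simp only [pararealMajorant]
        ring
    _ ≤ q ^ (n + 1) * n.choose (k + 2) * γ ^ (k + 2) * B
          + q ^ (n + 1) * n.choose (k + 1) * γ ^ (k + 2) * B := by
        gcongr
    _ = pararealMajorant q γ B (n + 1) (k + 1) := by
        rw [pararealMajorant, Nat.choose_succ_succ' n (k + 1)]
        push_cast
        ring

end pararealMajorant

theorem parareal_double_recursion_general {R : Type*} [CommSemiring R] [PartialOrder R]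
    [IsOrderedRing R] {q γ B : R} (hq : 1 ≤ q) (hγ : 0 ≤ γ) (hB : 0 ≤ B) {e : ℕ → ℕ → R}
    (hrow : ∀ k, e 0 k ≤ 0) (hcol : ∀ n, e (n + 1) 0 ≤ γ * B)
    (hrec : ∀ n k, e (n + 1) (k + 1) ≤ q * e n (k + 1) + γ * e n k) (n k : ℕ) :
    e n k ≤ pararealMajorant q γ B n k := by
  have hq₀ : 0 ≤ q := zero_le_one.trans hq
  have recursion_monotone : Monotone fun p : R × R ↦ q * p.1 + γ * p.2 :=
    (monotone_fst.const_mul hq₀).add (monotone_snd.const_mul hγ)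
  exact le_of_monotone_double_recursion recursion_monotone
    (fun k ↦ (hrow k).trans_eq (pararealMajorant.zero_left q γ B k).symm)
    (fun n ↦ (hcol n).trans (pararealMajorant.mul_le_succ_zero hq (mul_nonneg hγ hB) n))
    hrec (pararealMajorant.recursion_le_succ_succ hq hγ hB) n k

/-- The double-recursion estimate forming the inductive core of the proof of Theorem 4.5
of the paper: if `e(0,k) = 0`, `e(n,0) ≤ γ·B`, and
`e(n,k) ≤ (1 + C·ΔT)·e(n−1,k) + γ·e(n−1,k−1)` for `n,k ≥ 1`, then
`e(n,k) ≤ (1 + C·ΔT)^n · C(n, k+1) · γ^(k+1) · B`. -/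
theorem parareal_double_recursion
    (C ΔT γ B : ℝ) (hC : 0 ≤ C) (hΔT : 0 < ΔT) (hγ : 0 ≤ γ) (hB : 0 ≤ B)
    (e : ℕ → ℕ → ℝ) (hpos : ∀ n k, 0 ≤ e n k)
    (h0 : ∀ k, e 0 k = 0)
    (hbase : ∀ n, e n 0 ≤ γ * B)
    (hrec : ∀ n k : ℕ, 1 ≤ n → 1 ≤ k →
      e n k ≤ (1 + C * ΔT) * e (n - 1) k + γ * e (n - 1) (k - 1)) :
    ∀ n k : ℕ, e n k ≤ (1 + C * ΔT)^n * (n.choose (k + 1)) * γ^(k + 1) * B := by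
  have one_le_lipschitz : 1 ≤ 1 + C * ΔT := le_add_of_nonneg_right (mul_nonneg hC hΔT.le)
  exact parareal_double_recursion_general one_le_lipschitz hγ hB (fun k ↦ (h0 k).le)
    (fun n ↦ hbase (n + 1)) fun n k ↦ hrec (n + 1) (k + 1) n.succ_pos k.succ_pos
end
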